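/- arXiv:2105.08183 — 2 statements merged into one kernel-verified Lean document; each statement's English description precedes it below -/
import Mathlib

section
/- Let q > 2 be a prime power and let r be the largest prime divisor of q² − q + 1. Then r ≥ 5 and gcd(r, q³(q−1)(q+1)²) = 1. -/
/-!
The number `N = q² - q + 1` satisfies `N = q(q - 1) + 1` and `N = (q + 1)(q - 2) + 3`. The first
identity makes `N` odd and coprime to `q` and `q - 1`; the second shows that a common divisor of
`N` and `q + 1` divides `3`. Moreover `9 ∤ N`: if `3 ∣ N` then `q = 3k - 1`, so
`N = 9(k² - k) + 3`. Hence `3` can be the largest prime divisor of `N` only if `N = 3`, that is,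
if `q = 2` or `q = -1`.
-/

section CommRing

variable {R : Type*} [CommRing R]

lemma isCoprime_sq_sub_self_add_one_self (q : R) : IsCoprime (q ^ 2 - q + 1) q :=
  ⟨1, 1 - q, by ring⟩

lemma isCoprime_sq_sub_self_add_one_sub_one (q : R) : IsCoprime (q ^ 2 - q + 1) (q - 1) :=
  ⟨1, -q, by ring⟩

lemma isCoprime_add_one_of_dvd_sq_sub_self_add_one {c q : R} (hc : c ∣ q ^ 2 - q + 1)
    (h3 : IsCoprime c 3) : IsCoprime c (q + 1) := by
  obtain ⟨d, hd⟩ := hc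
  obtain ⟨a, b, hab⟩ := h3
  exact ⟨a + b * d, -b * (q - 2), by linear_combination hab - b * hd⟩

end CommRing

lemma natCast_sq_sub_self_add_one (q : ℕ) :
    ((q ^ 2 - q + 1 : ℕ) : ℤ) = (q : ℤ) ^ 2 - q + 1 := by
  rw [Nat.cast_add_one, Nat.cast_sub (Nat.le_self_pow two_ne_zero q), Nat.cast_pow]

lemma odd_sq_sub_self_add_one (q : ℤ) : Odd (q ^ 2 - q + 1) := by
  have heven : Even (q ^ 2 - q) := by
    simpa only [mul_sub_one, ← sq] using Int.even_mul_pred_self q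
  exact heven.add_one

lemma three_dvd_add_one_of_three_dvd_sq_sub_self_add_one {q : ℤ} (h : 3 ∣ q ^ 2 - q + 1) :
    3 ∣ q + 1 := by
  have hsq : 3 ∣ (q + 1) ^ 2 := by
    rw [show (q + 1) ^ 2 = q ^ 2 - q + 1 + 3 * q by ring]
    exact dvd_add h (dvd_mul_right 3 q)
  exact Int.prime_three.dvd_of_dvd_pow hsq

lemma not_nine_dvd_sq_sub_self_add_one (q : ℤ) : ¬ 9 ∣ q ^ 2 - q + 1 := by
  intro h9
  obtain ⟨k, hk⟩ := three_dvd_add_one_of_three_dvd_sq_sub_self_add_one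
    ((by norm_num : (3 : ℤ) ∣ 9).trans h9)
  have hN : q ^ 2 - q + 1 = 9 * (k ^ 2 - k) + 3 := by
    rw [eq_sub_of_add_eq hk]
    ring
  lia

lemma natAbs_sq_sub_self_add_one_eq_three_iff {q : ℤ} :
    (q ^ 2 - q + 1).natAbs = 3 ↔ q = -1 ∨ q = 2 := by
  have hpos : 0 ≤ q ^ 2 - q + 1 := by nlinarith [sq_nonneg (q - 1), sq_nonneg q]
  have hfactor : q ^ 2 - q + 1 - 3 = (q + 1) * (q - 2) := by ring
  calc (q ^ 2 - q + 1).natAbs = 3 ↔ q ^ 2 - q + 1 - 3 = 0 := by lia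
    _ ↔ q = -1 ∨ q = 2 := by rw [hfactor, mul_eq_zero, add_eq_zero_iff_eq_neg, sub_eq_zero]

lemma eq_three_pow_of_odd_of_forall_prime_dvd_le {n : ℕ} (hodd : Odd n)
    (hmax : ∀ s : ℕ, s.Prime → s ∣ n → s ≤ 3) : ∃ k, n = 3 ^ k :=
  ⟨_, Nat.eq_prime_pow_of_unique_prime_dvd hodd.pos.ne' fun hs hsn ↦
    (hmax _ hs hsn).antisymm (hs.odd_iff.mp (hodd.of_dvd_nat hsn))⟩

lemma five_le_of_forall_prime_dvd_le {n r : ℕ} (hodd : Odd n) (h9 : ¬ 9 ∣ n) (h3 : n ≠ 3)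
    (hr : r.Prime) (hrn : r ∣ n) (hmax : ∀ s : ℕ, s.Prime → s ∣ n → s ≤ r) : 5 ≤ r := by
  have hr2 : r ≠ 2 := by
    rintro rfl
    exact hodd.not_two_dvd_nat hrn
  refine hr.five_le_of_ne_two_of_ne_three hr2 ?_
  rintro rfl
  obtain ⟨k, rfl⟩ := eq_three_pow_of_odd_of_forall_prime_dvd_le hodd hmax
  have hk : k < 2 := by
    by_contra! hk
    exact h9 (pow_dvd_pow 3 hk)
  interval_cases k
  · exact hr.not_dvd_one hrn
  · exact h3 (pow_one 3)

theorem largest_prime_divisor_of_q_sq_sub_q_add_one_general {q : ℤ} (hq_neg_one : q ≠ -1)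
    (hq_two : q ≠ 2) {r : ℕ} (hr : r.Prime) (hrdvd : (r : ℤ) ∣ q ^ 2 - q + 1)
    (hrmax : ∀ s : ℕ, s.Prime → (s : ℤ) ∣ q ^ 2 - q + 1 → s ≤ r) :
    5 ≤ r ∧ IsCoprime (r : ℤ) (q ^ 3 * (q - 1) * (q + 1) ^ 2) := by
  have h5 : 5 ≤ r := by
    simp only [Int.natCast_dvd] at hrdvd hrmax
    refine five_le_of_forall_prime_dvd_le (odd_sq_sub_self_add_one q).natAbs ?_ ?_ hr hrdvd hrmax
    · exact mt Int.natCast_dvd.mpr (not_nine_dvd_sq_sub_self_add_one q)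
    · simp [natAbs_sq_sub_self_add_one_eq_three_iff, hq_neg_one, hq_two]
  have hr3 : IsCoprime (r : ℤ) 3 :=
    Nat.isCoprime_iff_coprime.mpr ((Nat.coprime_primes hr Nat.prime_three).mpr (by lia))
  have hq : IsCoprime (r : ℤ) q :=
    (isCoprime_sq_sub_self_add_one_self q).of_isCoprime_of_dvd_left hrdvd
  have hq_sub : IsCoprime (r : ℤ) (q - 1) :=
    (isCoprime_sq_sub_self_add_one_sub_one q).of_isCoprime_of_dvd_left hrdvd
  have hq_add : IsCoprime (r : ℤ) (q + 1) :=
    isCoprime_add_one_of_dvd_sq_sub_self_add_one hrdvd hr3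
  exact ⟨h5, (hq.pow_right.mul_right hq_sub).mul_right hq_add.pow_right⟩

/-- **Lemma on the largest prime divisor of `q² − q + 1`:** if `q > 2` is a prime power
and `r` is the largest prime divisor of `q² − q + 1`, then `r ≥ 5` and
`gcd(r, q³(q−1)(q+1)²) = 1`. -/
theorem largest_prime_divisor_of_q_sq_sub_q_add_one
    (q : ℕ) (hq : ∃ p k : ℕ, p.Prime ∧ 0 < k ∧ q = p ^ k) (hq2 : 2 < q)
    (r : ℕ) (hr : r.Prime) (hrdvd : r ∣ q ^ 2 - q + 1)
    (hrmax : ∀ s : ℕ, s.Prime → s ∣ q ^ 2 - q + 1 → s ≤ r) :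
    5 ≤ r ∧ Nat.gcd r (q ^ 3 * (q - 1) * (q + 1) ^ 2) = 1 := by
  simp only [← Int.natCast_dvd_natCast, natCast_sq_sub_self_add_one] at hrdvd hrmax
  simpa [← Nat.coprime_iff_gcd_eq_one, ← Nat.isCoprime_iff_coprime, Nat.cast_pred (by lia : 0 < q)]
    using largest_prime_divisor_of_q_sq_sub_q_add_one_general (by lia) (by lia) hr hrdvd hrmax
end

section
/- Let G be a finite noncyclic group and N a normal subgroup of G that is contained in every maximal subgroup of G. Then σ(G) = σ(G/N). -/
/-- The covering number `σ(G)`: the least cardinality of a set of proper subgroups of `G`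
whose union is all of `G` (junk value `sInf ∅ = 0` if no such finite set exists). -/
noncomputable def coveringNumber (G : Type*) [Group G] : ℕ :=
  sInf {n : ℕ | ∃ C : Finset (Subgroup G), C.card = n ∧ (∀ H ∈ C, H ≠ ⊤) ∧
    ∀ g : G, ∃ H ∈ C, g ∈ H}

/-!
Preimages under a surjection `f : G →* H` turn covers of `H` into covers of `G`, so
`σ(G) ≤ σ(H)`. Conversely, the images of a cover of `G` always have union `H`; the only danger is
that the image of a proper subgroup `K` is all of `H`, which happens exactly when `K` and `ker f`
generate `G`. When `ker f` lies in the Frattini subgroup this is impossible, because the Frattini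
subgroup consists of nongenerators.
-/

/-- A cover of `G`: finitely many proper subgroups of `G` whose union is `G`. These are the
families minimised over in `coveringNumber`; the union condition is stated elementwise. -/
structure IsProperCover {G : Type*} [Group G] (C : Finset (Subgroup G)) : Prop where
  ne_top : ∀ K ∈ C, K ≠ ⊤
  exists_mem : ∀ g : G, ∃ K ∈ C, g ∈ K

section

variable {G H : Type*} [Group G] [Group H]

theorem exists_isProperCover_of_not_isCyclic [Finite G] (hG : ¬IsCyclic G) :
    ∃ C : Finset (Subgroup G), IsProperCover C := by
  have hfin : (Set.range (Subgroup.zpowers : G → Subgroup G)).Finite := Set.finite_range _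
  refine ⟨hfin.toFinset, fun K hK hKtop => ?_, fun g => ?_⟩
  · obtain ⟨g, rfl⟩ := hfin.mem_toFinset.mp hK
    exact hG (isCyclic_iff_exists_zpowers_eq_top.mpr ⟨g, hKtop⟩)
  · exact ⟨.zpowers g, hfin.mem_toFinset.mpr ⟨g, rfl⟩, Subgroup.mem_zpowers g⟩

theorem coveringNumber_eq_sInf_card (G : Type*) [Group G] :
    coveringNumber G = sInf (Finset.card '' {C : Finset (Subgroup G) | IsProperCover C}) := by
  refine congrArg sInf (Set.ext fun n => exists_congr fun C => ?_)
  exact ⟨fun ⟨hcard, hne, hmem⟩ => ⟨⟨hne, hmem⟩, hcard⟩,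
    fun ⟨hC, hcard⟩ => ⟨hcard, hC.ne_top, hC.exists_mem⟩⟩

theorem coveringNumber_le_card {C : Finset (Subgroup G)} (hC : IsProperCover C) :
    coveringNumber G ≤ C.card :=
  (coveringNumber_eq_sInf_card G).trans_le (Nat.sInf_le (Set.mem_image_of_mem _ hC))

theorem exists_isProperCover_card_eq_coveringNumber
    (hG : ∃ C : Finset (Subgroup G), IsProperCover C) :
    ∃ C : Finset (Subgroup G), IsProperCover C ∧ C.card = coveringNumber G := by
  rw [coveringNumber_eq_sInf_card]
  exact Nat.sInf_mem (Set.Nonempty.image _ hG)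

theorem map_eq_top_iff_codisjoint_ker {f : G →* H} (hf : Function.Surjective f)
    {K : Subgroup G} : K.map f = ⊤ ↔ Codisjoint K f.ker := by
  rw [← Subgroup.map_eq_range_iff, MonoidHom.range_eq_top.mpr hf]

theorem IsProperCover.image_comap [DecidableEq (Subgroup G)] {f : G →* H}
    (hf : Function.Surjective f) {D : Finset (Subgroup H)} (hD : IsProperCover D) :
    IsProperCover (D.image (Subgroup.comap f)) where
  ne_top := by
    refine Finset.forall_mem_image.mpr fun K hK hKtop => hD.ne_top K hK ?_
    exact Subgroup.comap_injective hf (hKtop.trans (Subgroup.comap_top f).symm)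
  exists_mem g := by
    obtain ⟨K, hK, hg⟩ := hD.exists_mem (f g)
    exact ⟨K.comap f, Finset.mem_image_of_mem _ hK, hg⟩

theorem IsProperCover.image_map [DecidableEq (Subgroup H)] {f : G →* H}
    (hf : Function.Surjective f) {C : Finset (Subgroup G)} (hC : IsProperCover C)
    (hker : ∀ K ∈ C, ¬Codisjoint K f.ker) :
    IsProperCover (C.image (Subgroup.map f)) where
  ne_top := Finset.forall_mem_image.mpr fun K hK hKtop =>
    hker K hK ((map_eq_top_iff_codisjoint_ker hf).mp hKtop)
  exists_mem h := by
    obtain ⟨g, rfl⟩ := hf h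
    obtain ⟨K, hK, hg⟩ := hC.exists_mem g
    exact ⟨K.map f, Finset.mem_image_of_mem _ hK, Subgroup.mem_map_of_mem f hg⟩

theorem coveringNumber_le_of_surjective {f : G →* H} (hf : Function.Surjective f)
    (hH : ∃ D : Finset (Subgroup H), IsProperCover D) :
    coveringNumber G ≤ coveringNumber H := by
  classical
  obtain ⟨D, hD, hcard⟩ := exists_isProperCover_card_eq_coveringNumber hH
  calc coveringNumber G ≤ (D.image (Subgroup.comap f)).card :=
        coveringNumber_le_card (hD.image_comap hf)
    _ ≤ D.card := Finset.card_image_le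
    _ = coveringNumber H := hcard

theorem coveringNumber_eq_of_surjective {f : G →* H} (hf : Function.Surjective f)
    (hker : ∀ K : Subgroup G, Codisjoint K f.ker → K = ⊤)
    (hG : ∃ C : Finset (Subgroup G), IsProperCover C) :
    coveringNumber G = coveringNumber H := by
  classical
  obtain ⟨C, hC, hcard⟩ := exists_isProperCover_card_eq_coveringNumber hG
  have hmap : IsProperCover (C.image (Subgroup.map f)) :=
    hC.image_map hf fun K hK hcodisjoint => hC.ne_top K hK (hker K hcodisjoint)
  refine le_antisymm (coveringNumber_le_of_surjective hf ⟨_, hmap⟩) ?_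
  calc coveringNumber H ≤ (C.image (Subgroup.map f)).card := coveringNumber_le_card hmap
    _ ≤ C.card := Finset.card_image_le
    _ = coveringNumber G := hcard

theorem eq_top_of_codisjoint_of_forall_le_coatom [IsCoatomic (Subgroup G)] {K N : Subgroup G}
    (hN : ∀ M : Subgroup G, IsCoatom M → N ≤ M) (hKN : Codisjoint K N) : K = ⊤ :=
  have hfrattini : N ≤ frattini G := le_iInf₂ hN
  frattini_nongenerating (hKN.mono_right hfrattini).eq_top

theorem coveringNumber_eq_quotient_of_le_maximal_general (N : Subgroup G) [N.Normal]
    (hN : ∀ K : Subgroup G, Codisjoint K N → K = ⊤)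
    (hG : ∃ C : Finset (Subgroup G), IsProperCover C) :
    coveringNumber G = coveringNumber (G ⧸ N) := by
  refine coveringNumber_eq_of_surjective (QuotientGroup.mk'_surjective N) ?_ hG
  rwa [QuotientGroup.ker_mk']

end

/-- **Covering number and the Frattini-like condition:** if `G` is a finite noncyclic group
and `N` is a normal subgroup contained in every maximal subgroup of `G`, then
`σ(G) = σ(G/N)`. -/
theorem coveringNumber_eq_quotient_of_le_maximal
    (G : Type*) [Group G] [Finite G] (hG : ¬IsCyclic G)
    (N : Subgroup G) [N.Normal]
    (hN : ∀ H : Subgroup G, IsCoatom H → N ≤ H) :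
    coveringNumber G = coveringNumber (G ⧸ N) :=
  coveringNumber_eq_quotient_of_le_maximal_general N
    (fun _ => eq_top_of_codisjoint_of_forall_le_coatom hN) (exists_isProperCover_of_not_isCyclic hG)
end
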